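/- The singular values of the realigned matrix are local-unitary invariants: if U' = (u₁⊗u₂) U (v₁⊗v₂) with u₁,u₂,v₁,v₂ unitary d×d matrices, then U'^R (U'^R)† and U^R (U^R)† are unitarily similar; in particular tr[(U'^R U'^{R†})²] = tr[(U^R U^{R†})²]. -/

import Mathlib

open Matrix

open Kronecker

/-- Realignment: `(U^R)[(β,α),(j,i)] = U[(i,α),(j,β)]`. -/
def realign (d : ℕ) (U : Matrix (Fin d × Fin d) (Fin d × Fin d) ℂ) :
    Matrix (Fin d × Fin d) (Fin d × Fin d) ℂ :=
  Matrix.of fun p q => U (q.2, p.2) (q.1, p.1)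

theorem realign_local (d : ℕ)
    (U : Matrix (Fin d × Fin d) (Fin d × Fin d) ℂ)
    (u₁ u₂ v₁ v₂ : Matrix (Fin d) (Fin d) ℂ) :
    realign d ((u₁ ⊗ₖ u₂) * U * (v₁ ⊗ₖ v₂)) =
      (v₂ᵀ ⊗ₖ u₂) * realign d U * (v₁ ⊗ₖ u₁ᵀ) := by
  ext ⟨b, a⟩ ⟨j, i⟩
  simp only [realign, Matrix.of_apply, Matrix.mul_apply, Fintype.sum_prod_type,
    Matrix.kroneckerMap_apply, Matrix.transpose_apply, Finset.sum_mul]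
  refine Finset.sum_congr rfl fun j' _ => ?_
  rw [Finset.sum_comm]
  refine Finset.sum_congr rfl fun i' _ => ?_
  refine Finset.sum_congr rfl fun b' _ => ?_
  refine Finset.sum_congr rfl fun a' _ => ?_
  ring

theorem transpose_mem_unitary_aux {d : ℕ} {u : Matrix (Fin d) (Fin d) ℂ}
    (hu : u ∈ Matrix.unitaryGroup (Fin d) ℂ) : uᵀ ∈ Matrix.unitaryGroup (Fin d) ℂ := by
  rw [Matrix.mem_unitaryGroup_iff, Matrix.star_eq_conjTranspose]
  have h := Matrix.mem_unitaryGroup_iff'.1 hu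
  rw [Matrix.star_eq_conjTranspose] at h
  have h2 := congrArg Matrix.transpose h
  rw [Matrix.transpose_mul, Matrix.transpose_one] at h2
  exact h2

theorem realign_singular_values_LU_invariant (d : ℕ)
    (U : Matrix (Fin d × Fin d) (Fin d × Fin d) ℂ)
    (u₁ u₂ v₁ v₂ : Matrix (Fin d) (Fin d) ℂ)
    (hu₁ : u₁ ∈ Matrix.unitaryGroup (Fin d) ℂ)
    (hu₂ : u₂ ∈ Matrix.unitaryGroup (Fin d) ℂ)
    (hv₁ : v₁ ∈ Matrix.unitaryGroup (Fin d) ℂ)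
    (hv₂ : v₂ ∈ Matrix.unitaryGroup (Fin d) ℂ) :
    (∃ W ∈ Matrix.unitaryGroup (Fin d × Fin d) ℂ,
      realign d ((u₁ ⊗ₖ u₂) * U * (v₁ ⊗ₖ v₂)) *
          (realign d ((u₁ ⊗ₖ u₂) * U * (v₁ ⊗ₖ v₂)))ᴴ =
        W * (realign d U * (realign d U)ᴴ) * Wᴴ) ∧
    Matrix.trace ((realign d ((u₁ ⊗ₖ u₂) * U * (v₁ ⊗ₖ v₂)) *
        (realign d ((u₁ ⊗ₖ u₂) * U * (v₁ ⊗ₖ v₂)))ᴴ) ^ 2) =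
      Matrix.trace ((realign d U * (realign d U)ᴴ) ^ 2) := by
  have hW : (v₂ᵀ ⊗ₖ u₂) ∈ Matrix.unitaryGroup (Fin d × Fin d) ℂ :=
    Matrix.kronecker_mem_unitary (transpose_mem_unitary_aux hv₂) hu₂
  have hV : (v₁ ⊗ₖ u₁ᵀ) ∈ Matrix.unitaryGroup (Fin d × Fin d) ℂ :=
    Matrix.kronecker_mem_unitary hv₁ (transpose_mem_unitary_aux hu₁)
  rw [realign_local]
  generalize (v₂ᵀ ⊗ₖ u₂) = W at hW
  generalize (v₁ ⊗ₖ u₁ᵀ) = V at hV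
  generalize realign d U = R
  have hV1 : V * Vᴴ = 1 := Matrix.mem_unitaryGroup_iff.1 hV
  have hW1 : Wᴴ * W = 1 := Matrix.mem_unitaryGroup_iff'.1 hW
  have key : W * R * V * (W * R * V)ᴴ = W * (R * Rᴴ) * Wᴴ := by
    calc W * R * V * (W * R * V)ᴴ = W * R * (V * Vᴴ) * Rᴴ * Wᴴ := by
          simp only [Matrix.conjTranspose_mul, Matrix.mul_assoc]
      _ = W * (R * Rᴴ) * Wᴴ := by
          rw [hV1]; simp only [Matrix.mul_one, Matrix.mul_assoc]
  refine ⟨⟨W, hW, key⟩, ?_⟩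
  rw [key]
  generalize R * Rᴴ = A
  have h2 : (W * A * Wᴴ) ^ 2 = W * (A ^ 2 * Wᴴ) := by
    calc (W * A * Wᴴ) ^ 2 = W * A * (Wᴴ * W) * A * Wᴴ := by
          simp only [pow_two, Matrix.mul_assoc]
      _ = W * (A ^ 2 * Wᴴ) := by
          rw [hW1]; simp only [pow_two, Matrix.mul_one, Matrix.mul_assoc]
  rw [h2, Matrix.trace_mul_comm, Matrix.mul_assoc, hW1, Matrix.mul_one]
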